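/- arXiv:1801.09169 — 3 statements merged into one kernel-verified Lean document; each statement's English description precedes it below -/
import Mathlib

section
/- Let Λ = KQ/I be a basic finite-dimensional algebra over an algebraically closed field K and let d be a dimension vector. Then the maps Rep_d(Λ) → Seq(d) given by x ↦ S(M_x) (radical layering) and x ↦ S*(M_x) (socle layering) are both upper semicontinuous with respect to the dominance order on Seq(d): for every S ∈ Seq(d), the sets {x ∈ Rep_d(Λ) : S(M_x) ≥ S} and {x ∈ Rep_d(Λ) : S*(M_x) ≥ S} are Zariski-closed. -/
open Finset

/-! # Varieties of representations of a quiver with relations: basic setup -/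

/-- The Zariski topology on the affine space `ι → K`: it is generated by the basic open
sets `D(p) = {x | p(x) ≠ 0}`, where `p` ranges over multivariate polynomials. -/
def zariskiTopology (ι K : Type) [CommSemiring K] : TopologicalSpace (ι → K) :=
  TopologicalSpace.generateFrom
    {U | ∃ p : MvPolynomial ι K, U = {x | MvPolynomial.eval x p ≠ 0}}

/-- A finite quiver `Q`: vertices `Fin n`, arrows `Fin numArrows` with source and
target maps. -/
structure QuiverData where
  n : ℕ
  numArrows : ℕ
  src : Fin numArrows → Fin n
  tgt : Fin numArrows → Fin n

namespace QuiverData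

variable (Q : QuiverData) (d : Fin Q.n → ℕ) (K : Type) [Field K]

/-- Index of the coordinates of the affine space of `d`-dimensional representations:
for each arrow `a` a matrix entry index in `Fin (d (tgt a)) × Fin (d (src a))`. -/
abbrev Coords := Σ a : Fin Q.numArrows, Fin (d (Q.tgt a)) × Fin (d (Q.src a))

/-- The affine space of `d`-dimensional representations of `Q`:
a point `x` assigns to each arrow `a` a `d (tgt a) × d (src a)` matrix over `K`. -/
abbrev RepSpace := Coords Q d → K

/-- `RepSpace` carries the Zariski topology. -/
noncomputable instance instRepTop : TopologicalSpace (RepSpace Q d K) :=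
  zariskiTopology (Coords Q d) K

/-- The underlying `K`-vector space `⊕ᵢ K^{dᵢ}` of any `d`-dimensional representation. -/
abbrev Carrier := (Σ i : Fin Q.n, Fin (d i)) → K

/-- The projection onto the component of the `i`-th vertex (action of the primitive
idempotent `eᵢ`). -/
def proj (i : Fin Q.n) : Carrier Q d K →ₗ[K] Carrier Q d K where
  toFun m := fun jv => if jv.1 = i then m jv else 0
  map_add' u v := by
    funext jv; by_cases h : jv.1 = i <;> simp [h]
  map_smul' c u := by
    funext jv; by_cases h : jv.1 = i <;> simp [h]

/-- The action of the arrow `a` on the carrier space of the representation `x`. -/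
noncomputable def arrowMap (x : RepSpace Q d K) (a : Fin Q.numArrows) :
    Carrier Q d K →ₗ[K] Carrier Q d K where
  toFun m := fun jv =>
    if h : jv.1 = Q.tgt a then
      ∑ w : Fin (d (Q.src a)), x ⟨a, (Fin.cast (congrArg d h) jv.2, w)⟩ * m ⟨Q.src a, w⟩
    else 0
  map_add' u v := by
    funext jv
    by_cases h : jv.1 = Q.tgt a <;> simp [h, mul_add, Finset.sum_add_distrib]
  map_smul' c u := by
    funext jv
    by_cases h : jv.1 = Q.tgt a <;>
      simp [h, Finset.mul_sum, mul_comm, mul_left_comm, mul_assoc]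

/-- The action of a word `w = [a_k, …, a_1]` of arrows on the representation `x`
(the arrow `a_1` acts first; non-composable words act as `0`). -/
noncomputable def wordMap (x : RepSpace Q d K) (w : List (Fin Q.numArrows)) :
    Module.End K (Carrier Q d K) :=
  (w.map fun a => (arrowMap Q d K x a : Module.End K (Carrier Q d K))).prod

/-- The submodule `J^l · M_x` of the module `M_x`: the sum of the images of all words of
arrows of length `l` (for an admissible ideal, the radical acts through the arrows). -/
noncomputable def radPow (x : RepSpace Q d K) (l : ℕ) : Submodule K (Carrier Q d K) :=
  ⨆ w : {w : List (Fin Q.numArrows) // w.length = l},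
    LinearMap.range (wordMap Q d K x w.1)

/-- The socle series of `M_x`: `socPow x l = soc_l(M_x)`. -/
noncomputable def socPow (x : RepSpace Q d K) : ℕ → Submodule K (Carrier Q d K)
  | 0 => ⨅ a, LinearMap.ker (arrowMap Q d K x a)
  | (l+1) => ⨅ a, (socPow x l).comap (arrowMap Q d K x a)

/-- The dimension, at the vertex `i`, of a (vertex-graded) subspace `N`. -/
noncomputable def vdim (N : Submodule K (Carrier Q d K)) (i : Fin Q.n) : ℕ :=
  Module.finrank K (N.map (proj Q d K i))

/-- The radical layering `S(M_x) = (M/JM, JM/J²M, …, J^L M/J^{L+1} M)` of the module `M_x`,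
recorded through the dimension vectors of its semisimple layers. -/
noncomputable def radLayering (L : ℕ) (x : RepSpace Q d K) :
    Fin (L+1) → Fin Q.n → ℕ :=
  fun l i => vdim Q d K (radPow Q d K x l) i - vdim Q d K (radPow Q d K x (l+1)) i

/-- The socle layering `S*(M_x) = (soc₀M, soc₁M/soc₀M, …)` of the module `M_x`, recorded
through the dimension vectors of its semisimple layers. -/
noncomputable def socLayering (L : ℕ) (x : RepSpace Q d K) :
    Fin (L+1) → Fin Q.n → ℕ :=
  fun l i => vdim Q d K (socPow Q d K x l) i -
    (if (l : ℕ) = 0 then 0 else vdim Q d K (socPow Q d K x ((l : ℕ) - 1)) i)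

end QuiverData

/-- The dominance order on semisimple sequences (recorded as sequences of dimension
vectors): `dominates S S'` means `S ≤ S'`, i.e. `⊕_{j≤l} S_j ⊆ ⊕_{j≤l} S'_j` for all `l`. -/
def dominates {n L : ℕ} (S S' : Fin (L+1) → Fin n → ℕ) : Prop :=
  ∀ (l : Fin (L+1)) (i : Fin n),
    ∑ j ∈ Finset.univ.filter (fun j => j ≤ l), S j i ≤
      ∑ j ∈ Finset.univ.filter (fun j => j ≤ l), S' j i

/-- A semisimple sequence has dimension vector `d` if its layers' dimension vectors sum
to `d`. -/
def hasDimVec {n L : ℕ} (S : Fin (L+1) → Fin n → ℕ) (d : Fin n → ℕ) : Prop :=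
  ∀ i, ∑ l, S l i = d i

namespace QuiverData

variable (Q : QuiverData) (d : Fin Q.n → ℕ) (K : Type) [Field K]

/-- Evaluation of a formal noncommutative polynomial in the vertices (`Sum.inl`) and
arrows (`Sum.inr`) of `Q` on the representation `x`; an element of the path algebra `KQ`
is represented by such a polynomial. -/
noncomputable def evalRel (x : RepSpace Q d K) :
    FreeAlgebra K (Fin Q.n ⊕ Fin Q.numArrows) →ₐ[K] Module.End K (Carrier Q d K) :=
  FreeAlgebra.lift K
    (Sum.elim (fun i => (proj Q d K i : Module.End K (Carrier Q d K)))
      (fun a => (arrowMap Q d K x a : Module.End K (Carrier Q d K))))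

/-- The affine variety `Rep_d(Λ)` for `Λ = KQ/I`, where the ideal `I` is generated by the
set `R` of relations: the set of points of `RepSpace` annihilating every relation. -/
def RepVar (R : Set (FreeAlgebra K (Fin Q.n ⊕ Fin Q.numArrows))) :
    Set (RepSpace Q d K) :=
  {x | ∀ r ∈ R, evalRel Q d K x r = 0}

/-- The affine variety `Rep_d(Λ)` for the truncated path algebra
`Λ = KQ/⟨all paths of length L+1⟩`. -/
def TruncRepVar (L : ℕ) : Set (RepSpace Q d K) :=
  {x | ∀ w : List (Fin Q.numArrows), w.length = L + 1 → wordMap Q d K x w = 0}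

/-- A submodule of `M_x`, i.e. a subspace stable under the arrows and the vertex
idempotents. -/
def Stable (x : RepSpace Q d K) (N : Submodule K (Carrier Q d K)) : Prop :=
  (∀ a, N.map (arrowMap Q d K x a) ≤ N) ∧ ∀ i, N.map (proj Q d K i) ≤ N

/-- A submodule `N` of `M_x` is indecomposable (as a module). -/
def IndecompSub (x : RepSpace Q d K) (N : Submodule K (Carrier Q d K)) : Prop :=
  N ≠ ⊥ ∧ ∀ N₁ N₂ : Submodule K (Carrier Q d K),
    Stable Q d K x N₁ → Stable Q d K x N₂ → N₁ ≤ N → N₂ ≤ N →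
    N₁ ⊔ N₂ = N → N₁ ⊓ N₂ = ⊥ → N₁ = ⊥ ∨ N₂ = ⊥

/-- The module `M_x` is indecomposable. -/
def IndecompRep (x : RepSpace Q d K) : Prop :=
  IndecompSub Q d K x ⊤

/-- The module `M_x` is uniserial: its submodules form a chain. -/
def UniserialRep (x : RepSpace Q d K) : Prop :=
  ∀ N₁ N₂ : Submodule K (Carrier Q d K),
    Stable Q d K x N₁ → Stable Q d K x N₂ → N₁ ≤ N₂ ∨ N₂ ≤ N₁

/-- `M_x` decomposes as a direct sum of `s` indecomposable submodules whose dimension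
vectors are `D 0, …, D (s-1)`. -/
def DecompWith (x : RepSpace Q d K) (s : ℕ) (D : Fin s → Fin Q.n → ℕ) : Prop :=
  ∃ N : Fin s → Submodule K (Carrier Q d K),
    (∀ r, Stable Q d K x (N r)) ∧
    (∀ r, Disjoint (N r) (⨆ t, ⨆ (_ : t ≠ r), N t)) ∧
    (⨆ r, N r) = ⊤ ∧
    (∀ r, IndecompSub Q d K x (N r)) ∧
    ∀ r i, vdim Q d K (N r) i = D r i

/-- A homomorphism of representations `M_x → M_y` (for possibly different dimension
vectors): a linear map commuting with the arrow actions and the vertex projections. -/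
def RepHom (dx dy : Fin Q.n → ℕ) (x : RepSpace Q dx K) (y : RepSpace Q dy K)
    (φ : Carrier Q dx K →ₗ[K] Carrier Q dy K) : Prop :=
  (∀ a, φ ∘ₗ arrowMap Q dx K x a = arrowMap Q dy K y a ∘ₗ φ) ∧
  ∀ i, φ ∘ₗ proj Q dx K i = proj Q dy K i ∘ₗ φ

/-- The submodule `N` of `M_x` is isomorphic, as a representation, to `M_y`. -/
def SubrepIso (dy : Fin Q.n → ℕ) (x : RepSpace Q d K)
    (N : Submodule K (Carrier Q d K)) (y : RepSpace Q dy K) : Prop :=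
  ∃ φ : Carrier Q d K →ₗ[K] Carrier Q dy K,
    N ⊓ LinearMap.ker φ = ⊥ ∧ N.map φ = ⊤ ∧
    (∀ a, ∀ m ∈ N, φ (arrowMap Q d K x a m) = arrowMap Q dy K y a (φ m)) ∧
    (∀ i, ∀ m ∈ N, φ (proj Q d K i m) = proj Q dy K i (φ m))

/-- The representations `M_x` and `M_y` are isomorphic; the isomorphism classes are
exactly the orbits of the `GL(d)`-action. -/
def IsoRep (x y : RepSpace Q d K) : Prop :=
  ∃ φ : Carrier Q d K ≃ₗ[K] Carrier Q d K,
    (∀ a m, φ (arrowMap Q d K x a m) = arrowMap Q d K y a (φ m)) ∧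
    ∀ i m, φ (proj Q d K i m) = proj Q d K i (φ m)

/-- The `GL(d)`-orbit of the point `x`, i.e. the set of points encoding modules
isomorphic to `M_x`. -/
def orbitSet (x : RepSpace Q d K) : Set (RepSpace Q d K) :=
  {y | IsoRep Q d K x y}

/-- Given a family `P` of varieties `Rep_dv(Λ)` (one for every dimension vector `dv`),
`Ext¹_Λ(M_x, M_y) = 0`: every extension `0 → M_y → E → M_x → 0` of `Λ`-modules splits. -/
def Ext1Zero (P : ∀ dv : Fin Q.n → ℕ, Set (RepSpace Q dv K))
    (dx dy : Fin Q.n → ℕ) (x : RepSpace Q dx K) (y : RepSpace Q dy K) : Prop :=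
  ∀ z ∈ P (fun i => dx i + dy i),
    ∀ (ι : Carrier Q dy K →ₗ[K] Carrier Q (fun i => dx i + dy i) K)
      (π : Carrier Q (fun i => dx i + dy i) K →ₗ[K] Carrier Q dx K),
      RepHom Q K dy (fun i => dx i + dy i) y z ι →
      RepHom Q K (fun i => dx i + dy i) dx z x π →
      Function.Injective ι → Function.Surjective π →
      LinearMap.ker π = LinearMap.range ι →
      ∃ σ : Carrier Q dx K →ₗ[K] Carrier Q (fun i => dx i + dy i) K,
        RepHom Q K dx (fun i => dx i + dy i) x z σ ∧ π ∘ₗ σ = LinearMap.id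

/-- The direct sum `C₁ ⊕ ⋯ ⊕ C_s` of subvarieties `C_r ⊆ Rep_{D r}(Λ)`: the set of
points `x ∈ Rep_d(Λ)` whose module decomposes as `M_x ≅ ⊕_r M^{(r)}` with `M^{(r)}`
encoded by a point of `C_r`. -/
def DirectSumSet (s : ℕ) (D : Fin s → Fin Q.n → ℕ)
    (Cs : ∀ r : Fin s, Set (RepSpace Q (D r) K)) : Set (RepSpace Q d K) :=
  {x | ∃ N : Fin s → Submodule K (Carrier Q d K),
    (∀ r, Stable Q d K x (N r)) ∧
    (∀ r, Disjoint (N r) (⨆ t, ⨆ (_ : t ≠ r), N t)) ∧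
    (⨆ r, N r) = ⊤ ∧
    ∀ r, ∃ y ∈ Cs r, SubrepIso Q d K (D r) x (N r) y}

/-- The endomorphism space `End_Λ(M_x)` of the module `M_x`. -/
def endSpace (x : RepSpace Q d K) :
    Submodule K (Carrier Q d K →ₗ[K] Carrier Q d K) where
  carrier := {φ | RepHom Q K d d x x φ}
  add_mem' := by
    intro φ ψ hφ hψ
    exact ⟨fun a => by rw [LinearMap.add_comp, LinearMap.comp_add, hφ.1 a, hψ.1 a],
      fun i => by rw [LinearMap.add_comp, LinearMap.comp_add, hφ.2 i, hψ.2 i]⟩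
  zero_mem' := by
    exact ⟨fun a => by simp, fun i => by simp⟩
  smul_mem' := by
    intro c φ hφ
    exact ⟨fun a => by rw [LinearMap.smul_comp, LinearMap.comp_smul, hφ.1 a],
      fun i => by rw [LinearMap.smul_comp, LinearMap.comp_smul, hφ.2 i]⟩

/-- A word of arrows is a (composable) path when read in function-composition order. -/
def IsPathWord (w : List (Fin Q.numArrows)) : Prop :=
  List.Chain' (fun a b => Q.src a = Q.tgt b) w

/-- The quiver `Q` has no oriented cycles. -/
def Acyclic : Prop :=
  ∀ (a : Fin Q.numArrows) (w : List (Fin Q.numArrows)),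
    IsPathWord Q (a :: w) →
      Q.tgt a ≠ Q.src ((a :: w).getLast (List.cons_ne_nil a w))

/-- A filtration `M_x = F 0 ⊇ F 1 ⊇ ⋯ ⊇ F (L+1) = 0` by submodules which is governed by
the semisimple sequence `S`: each layer `F l / F (l+1)` is semisimple, isomorphic to `S l`. -/
def Governed (L : ℕ) (x : RepSpace Q d K) (S : Fin (L+1) → Fin Q.n → ℕ)
    (F : Fin (L+2) → Submodule K (Carrier Q d K)) : Prop :=
  F 0 = ⊤ ∧ F (Fin.last (L+1)) = ⊥ ∧
  (∀ l : Fin (L+1), F l.succ ≤ F l.castSucc) ∧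
  (∀ (l : Fin (L+2)) (i : Fin Q.n), (F l).map (proj Q d K i) ≤ F l) ∧
  (∀ (l : Fin (L+1)) (a : Fin Q.numArrows),
      (F l.castSucc).map (arrowMap Q d K x a) ≤ F l.succ) ∧
  ∀ (l : Fin (L+1)) (i : Fin Q.n),
      vdim Q d K (F l.castSucc) i = S l i + vdim Q d K (F l.succ) i

/-- `Filt S`: the set of points whose module has a filtration governed by `S`. -/
def FiltSet (L : ℕ) (S : Fin (L+1) → Fin Q.n → ℕ) : Set (RepSpace Q d K) :=
  {x | ∃ F, Governed Q d K L x S F}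

/-- `Γ(M_x)`: the number of semisimple sequences which are realizable (i.e. occur as the
radical layering of a module in the variety `P`) and which govern some filtration of `M_x`. -/
noncomputable def gammaCount (L : ℕ) (P : Set (RepSpace Q d K))
    (x : RepSpace Q d K) : ℕ :=
  Set.ncard {S : Fin (L+1) → Fin Q.n → ℕ |
    (∃ y ∈ P, radLayering Q d K L y = S) ∧ ∃ F, Governed Q d K L x S F}

/-- `Sstar` is the generic (= minimal, attained) socle layering of the modules in `W`. -/
def GenSoc (L : ℕ) (W : Set (RepSpace Q d K))
    (Sstar : Fin (L+1) → Fin Q.n → ℕ) : Prop :=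
  (∀ x ∈ W, dominates Sstar (socLayering Q d K L x)) ∧
  ∃ x ∈ W, socLayering Q d K L x = Sstar

end QuiverData

namespace QuiverData

variable (Q : QuiverData)

/-- The `i`-th entry of the row vector `e·A` (over `ℤ`), where `A` is the adjacency
matrix of `Q`: the sum of `e (src a)` over all arrows `a` ending at `i`. -/
def inflowZ (e : Fin Q.n → ℤ) (i : Fin Q.n) : ℤ :=
  ∑ a ∈ Finset.univ.filter (fun a => Q.tgt a = i), e (Q.src a)

/-- The `i`-th entry of the row vector `e·B` (over `ℤ`), where `B` is the transpose of
the adjacency matrix of `Q`. -/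
def outflowZ (e : Fin Q.n → ℤ) (i : Fin Q.n) : ℤ :=
  ∑ a ∈ Finset.univ.filter (fun a => Q.src a = i), e (Q.tgt a)

/-- Partial sums `t⁽⁰⁾ + ⋯ + t⁽ˡ⁾` of the recursion
`t⁽⁰⁾ = sup{0, d − d·A}`, `t⁽ˡ⁺¹⁾ = sup{0, (d − ∑_{k≤l} t⁽ᵏ⁾) − (d − ∑_{k≤l} t⁽ᵏ⁾)·A}`
(computed componentwise). -/
def cumLayer (dz : Fin Q.n → ℤ) : ℕ → Fin Q.n → ℤ
  | 0 => fun i => max 0 (dz i - inflowZ Q dz i)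
  | (l+1) => fun i =>
      cumLayer dz l i +
        max 0 ((dz i - cumLayer dz l i) -
          inflowZ Q (fun j => dz j - cumLayer dz l j) i)

/-- The positive part `∑ᵢ eᵢ fᵢ` of the Euler form of `Q`. -/
def eulerHomPart (e f : Fin Q.n → ℕ) : ℕ := ∑ i, e i * f i

/-- The negative part `∑_{α} e_{src α} f_{tgt α}` of the Euler form of `Q`, so that
`⟨e, f⟩ = eulerHomPart e f − eulerExtPart e f`. -/
def eulerExtPart (e f : Fin Q.n → ℕ) : ℕ :=
  ∑ a, e (Q.src a) * f (Q.tgt a)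

end QuiverData

/-- The quiver with a single vertex and `r` loops. -/
def QuiverData.loopQuiver (r : ℕ) : QuiverData :=
  ⟨1, r, fun _ => 0, fun _ => 0⟩

namespace QuiverData

variable (Q : QuiverData) (d : Fin Q.n → ℕ) (K : Type) [Field K]

/-- The variety `Rep_d(Λ)` for `Λ = KQ/⟨Rels⟩`, regarded as a topological space with the
(subspace) Zariski topology. -/
abbrev GenV (Rels : Set (FreeAlgebra K (Fin Q.n ⊕ Fin Q.numArrows))) :=
  {y : RepSpace Q d K // y ∈ RepVar Q d K Rels}

/-- The variety `Rep_d(Λ)` for the truncated path algebra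
`Λ = KQ/⟨paths of length L+1⟩`, regarded as a topological space. -/
abbrev TruncV (L : ℕ) := {y : RepSpace Q d K // y ∈ TruncRepVar Q d K L}

end QuiverData


namespace QuiverData

open scoped Topology

/-- A function on affine space given by a polynomial. -/
def IsPolyFun {ι K : Type} [CommRing K] (f : (ι → K) → K) : Prop :=
  ∃ p : MvPolynomial ι K, ∀ x, f x = MvPolynomial.eval x p

namespace IsPolyFun
variable {ι K : Type} [CommRing K]

theorem const (c : K) : IsPolyFun (fun _ : ι → K => c) :=
  ⟨MvPolynomial.C c, fun x => by simp⟩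

theorem coord (i : ι) : IsPolyFun (fun x : ι → K => x i) :=
  ⟨MvPolynomial.X i, fun x => by simp⟩

theorem mul {f g : (ι → K) → K} (hf : IsPolyFun f) (hg : IsPolyFun g) :
    IsPolyFun (fun x => f x * g x) := by
  obtain ⟨p, hp⟩ := hf
  obtain ⟨q, hq⟩ := hg
  exact ⟨p * q, fun x => by simp [hp, hq]⟩

theorem sum {β : Type} (s : Finset β) {f : β → (ι → K) → K} (hf : ∀ b, IsPolyFun (f b)) :
    IsPolyFun (fun x => ∑ b ∈ s, f b x) := by
  choose p hp using hf
  exact ⟨∑ b ∈ s, p b, fun x => by simp [hp]⟩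

theorem prod {β : Type} (s : Finset β) {f : β → (ι → K) → K} (hf : ∀ b, IsPolyFun (f b)) :
    IsPolyFun (fun x => ∏ b ∈ s, f b x) := by
  choose p hp using hf
  exact ⟨∏ b ∈ s, p b, fun x => by simp [hp]⟩

theorem det {n : Type} [Fintype n] [DecidableEq n] {A : (ι → K) → Matrix n n K}
    (hA : ∀ i j, IsPolyFun (fun x => A x i j)) : IsPolyFun (fun x => (A x).det) := by
  simp only [Matrix.det_apply']
  exact sum _ fun σ => (const _).mul (prod _ fun i => hA _ _)

theorem matMul {l m n : Type} [Fintype m] {A : (ι → K) → Matrix l m K}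
    {B : (ι → K) → Matrix m n K}
    (hA : ∀ i j, IsPolyFun (fun x => A x i j)) (hB : ∀ i j, IsPolyFun (fun x => B x i j)) :
    ∀ i j, IsPolyFun (fun x => (A x * B x) i j) := by
  intro i j
  simp only [Matrix.mul_apply]
  exact sum _ fun k => (hA _ _).mul (hB _ _)

theorem isOpen {f : (ι → K) → K} (hf : IsPolyFun f) :
    IsOpen[zariskiTopology ι K] {x | f x ≠ 0} := by
  obtain ⟨p, hp⟩ := hf
  refine TopologicalSpace.isOpen_generateFrom_of_mem ⟨p, ?_⟩
  simp [hp]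

end IsPolyFun

/-- If the rank of `A` is at least `r`, then some compression of `A` to size `r` is the
identity. -/
theorem exists_compress {K : Type} [Field K] {m n : Type} [Fintype m] [Fintype n]
    (A : Matrix m n K) (r : ℕ) (h : r ≤ A.rank) :
    ∃ (U : Matrix (Fin r) m K) (V : Matrix n (Fin r) K), U * A * V = 1 := by
  classical
  have h' : r ≤ Module.finrank K (LinearMap.range A.mulVecLin) := h
  obtain ⟨f, hf⟩ := exists_linearIndependent_of_le_finrank h'
  choose v hv using fun k => (f k).2
  let T : (Fin r → K) →ₗ[K] (n → K) := Fintype.linearCombination K v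
  have hinj : LinearMap.ker (A.mulVecLin ∘ₗ T) = ⊥ := by
    have hf2 : LinearIndependent K (fun k => ((f k : _) : m → K)) :=
      hf.map' (Submodule.subtype _) (by simp)
    rw [LinearMap.ker_eq_bot']
    intro c hc
    have : ∑ k, c k • ((f k : _) : m → K) = 0 := by
      rw [← hc]
      simp only [T, LinearMap.comp_apply, Fintype.linearCombination_apply, map_sum, map_smul, hv]
    exact funext (Fintype.linearIndependent_iff.1 hf2 c this)
  obtain ⟨g, hg⟩ := LinearMap.exists_leftInverse_of_injective _ hinj
  refine ⟨LinearMap.toMatrix' g, LinearMap.toMatrix' T, ?_⟩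
  have : A = LinearMap.toMatrix' A.mulVecLin := by
    exact (LinearMap.toMatrix'_toLin' A).symm
  rw [this, ← LinearMap.toMatrix'_comp, ← LinearMap.toMatrix'_comp, LinearMap.comp_assoc, hg,
    LinearMap.toMatrix'_id]

theorem isOpen_rank {ι K : Type} [Field K] {m n : Type} [Fintype m] [Fintype n]
    {A : (ι → K) → Matrix m n K} (hA : ∀ i j, IsPolyFun (fun x => A x i j)) (r : ℕ) :
    IsOpen[zariskiTopology ι K] {x | r ≤ (A x).rank} := by
  classical
  letI := zariskiTopology ι K
  have : {x | r ≤ (A x).rank} =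
      ⋃ (U : Matrix (Fin r) m K) (V : Matrix n (Fin r) K), {x | (U * A x * V).det ≠ 0} := by
    ext x
    simp only [Set.mem_ofPred_eq, Set.mem_iUnion]
    constructor
    · intro h
      obtain ⟨U, V, h⟩ := exists_compress (A x) r h
      exact ⟨U, V, by simp [h]⟩
    · rintro ⟨U, V, h⟩
      have h1 : (U * A x * V).rank = r := by
        have := Matrix.rank_of_isUnit (U * A x * V)
          ((Matrix.isUnit_iff_isUnit_det _).2 (isUnit_iff_ne_zero.2 h))
        simpa using this
      calc r = (U * A x * V).rank := h1.symm
        _ ≤ (U * A x).rank := Matrix.rank_mul_le_left _ _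
        _ ≤ (A x).rank := Matrix.rank_mul_le_right _ _
  rw [this]
  refine isOpen_iUnion fun U => isOpen_iUnion fun V => ?_
  exact (IsPolyFun.det (IsPolyFun.matMul
    (IsPolyFun.matMul (fun i j => IsPolyFun.const (U i j)) hA)
    (fun i j => IsPolyFun.const (V i j)))).isOpen

theorem isClosed_le_sub_rank {ι K : Type} [Field K] {m n : Type} [Fintype m] [Fintype n]
    {A : (ι → K) → Matrix m n K} (hA : ∀ i j, IsPolyFun (fun x => A x i j)) (a b : ℕ) :
    IsClosed[zariskiTopology ι K] {x | a ≤ b - (A x).rank} := by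
  letI := zariskiTopology ι K
  rcases Nat.eq_zero_or_pos a with rfl | ha
  · simp
  by_cases hab : a ≤ b
  · rw [← isOpen_compl_iff]
    convert isOpen_rank hA (b - a + 1) using 1
    ext x
    simp only [Set.mem_compl_iff, Set.mem_ofPred_eq]
    omega
  · have : {x | a ≤ b - (A x).rank} = ∅ := by
      ext x
      simp only [Set.mem_ofPred_eq, Set.mem_empty_iff_false, iff_false]
      intro h
      exact hab (h.trans (Nat.sub_le _ _))
    rw [this]
    exact isClosed_empty

section
variable (Q : QuiverData) (d : Fin Q.n → ℕ) (K : Type) [Field K]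

theorem poly_arrow (a : Fin Q.numArrows) (i j) :
    IsPolyFun (fun x : RepSpace Q d K => LinearMap.toMatrix' (arrowMap Q d K x a) i j) := by
  simp only [LinearMap.toMatrix'_apply]
  simp only [arrowMap, LinearMap.coe_mk, AddHom.coe_mk]
  by_cases h : i.1 = Q.tgt a
  · simp only [h, dif_pos]
    exact IsPolyFun.sum _ fun w => (IsPolyFun.coord _).mul (IsPolyFun.const _)
  · simp only [h, dif_neg, not_false_eq_true]
    exact IsPolyFun.const 0

theorem wordMap_cons (x : RepSpace Q d K) (a) (w : List (Fin Q.numArrows)) :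
    wordMap Q d K x (a :: w) = arrowMap Q d K x a ∘ₗ wordMap Q d K x w := by
  simp [wordMap, Module.End.mul_eq_comp]

theorem wordMap_concat (x : RepSpace Q d K) (a) (w : List (Fin Q.numArrows)) :
    wordMap Q d K x (w ++ [a]) = wordMap Q d K x w ∘ₗ arrowMap Q d K x a := by
  simp [wordMap, Module.End.mul_eq_comp]

theorem poly_word (w : List (Fin Q.numArrows)) : ∀ i j,
    IsPolyFun (fun x : RepSpace Q d K => LinearMap.toMatrix' (wordMap Q d K x w) i j) := by
  induction w with
  | nil =>
    intro i j
    simp only [wordMap, List.map_nil, List.prod_nil]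
    exact IsPolyFun.const _
  | cons a w ih =>
    simp only [wordMap_cons, LinearMap.toMatrix'_comp]
    exact IsPolyFun.matMul (poly_arrow Q d K a) ih

/-- Words of fixed length. -/
abbrev Wd (l : ℕ) := {w : List (Fin Q.numArrows) // w.length = l}

noncomputable instance (l : ℕ) : Fintype (Wd Q l) :=
  inferInstanceAs (Fintype (List.Vector (Fin Q.numArrows) l))

theorem vdim_mono {N N' : Submodule K (Carrier Q d K)} (h : N ≤ N') (i) :
    vdim Q d K N i ≤ vdim Q d K N' i :=
  Submodule.finrank_mono (Submodule.map_mono h)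

theorem radPow_succ_le (x : RepSpace Q d K) (l : ℕ) :
    radPow Q d K x (l+1) ≤ radPow Q d K x l := by
  refine iSup_le ?_
  rintro ⟨w, hw⟩
  have hne : w ≠ [] := by rintro rfl; simp at hw
  have hww := wordMap_concat Q d K x (w.getLast hne) w.dropLast
  rw [List.dropLast_append_getLast hne] at hww
  change LinearMap.range (wordMap Q d K x w) ≤ _
  rw [hww]
  refine (LinearMap.range_comp_le_range _ _).trans ?_
  exact le_iSup (fun w : Wd Q l => LinearMap.range (wordMap Q d K x w.1))
    ⟨w.dropLast, by simp [hw]⟩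

theorem radPow_zero (x : RepSpace Q d K) : radPow Q d K x 0 = ⊤ := by
  rw [eq_top_iff]
  refine le_trans ?_ (le_iSup (fun w : Wd Q 0 => LinearMap.range (wordMap Q d K x w.1))
    ⟨[], rfl⟩)
  simp [wordMap, Module.End.one_eq_id]

/-- Matrix of generators of the `i`-th component of `J^l M_x`. -/
noncomputable def radMat (i : Fin Q.n) (l : ℕ) (x : RepSpace Q d K) :
    Matrix (Σ i : Fin Q.n, Fin (d i)) (Wd Q l × (Σ i : Fin Q.n, Fin (d i))) K :=
  fun k p => LinearMap.toMatrix' (proj Q d K i ∘ₗ wordMap Q d K x p.1.1) k p.2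

theorem poly_radMat (i : Fin Q.n) (l : ℕ) (k p) :
    IsPolyFun (fun x => radMat Q d K i l x k p) := by
  simp only [radMat, LinearMap.toMatrix'_comp]
  exact IsPolyFun.matMul (A := fun _ => LinearMap.toMatrix' (proj Q d K i))
    (fun i j => IsPolyFun.const _) (poly_word Q d K p.1.1) _ _

theorem range_eq_span (T : Carrier Q d K →ₗ[K] Carrier Q d K) :
    LinearMap.range T = Submodule.span K (Set.range fun j => T (Pi.single j 1)) := by
  rw [LinearMap.range_eq_map, ← (Pi.basisFun K _).span_eq, Submodule.map_span, ← Set.range_comp]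
  congr 2
  ext j : 1
  simp

theorem vdim_rad (i : Fin Q.n) (l : ℕ) (x : RepSpace Q d K) :
    vdim Q d K (radPow Q d K x l) i = (radMat Q d K i l x).rank := by
  rw [Matrix.rank_eq_finrank_span_cols, vdim, radPow, Submodule.map_iSup]
  have hr : ∀ w : Wd Q l, (LinearMap.range (wordMap Q d K x w.1)).map (proj Q d K i) =
      Submodule.span K (Set.range fun j =>
        (proj Q d K i ∘ₗ wordMap Q d K x w.1) (Pi.single j 1)) := by
    intro w
    rw [← range_eq_span]
    exact (LinearMap.range_comp _ _).symm
  rw [iSup_congr hr, ← Submodule.span_iUnion]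
  have hset : (⋃ w : Wd Q l, Set.range fun j =>
        (proj Q d K i ∘ₗ wordMap Q d K x w.1) (Pi.single j 1)) =
      Set.range (radMat Q d K i l x).col := by
    ext v
    simp only [Set.mem_iUnion, Set.mem_range, Prod.exists]
    refine exists_congr fun w => exists_congr fun j => ?_
    have : (radMat Q d K i l x).col (w, j) =
        (proj Q d K i ∘ₗ wordMap Q d K x w.1) (Pi.single j 1) := by
      ext k
      simp [radMat, Matrix.col, LinearMap.toMatrix'_apply]
    rw [this]
  rw [hset]

theorem socPow_eq (x : RepSpace Q d K) (l : ℕ) (m : Carrier Q d K) :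
    m ∈ socPow Q d K x l ↔ ∀ w : Wd Q (l+1), wordMap Q d K x w.1 m = 0 := by
  induction l generalizing m with
  | zero =>
    simp only [socPow, Submodule.mem_iInf, LinearMap.mem_ker]
    constructor
    · rintro h ⟨w, hw⟩
      obtain ⟨a, rfl⟩ := List.length_eq_one_iff.1 hw
      simpa [wordMap] using h a
    · intro h a
      simpa [wordMap] using h ⟨[a], rfl⟩
  | succ l ih =>
    simp only [socPow, Submodule.mem_iInf, Submodule.mem_comap, ih]
    constructor
    · rintro h ⟨w, hw⟩
      have hne : w ≠ [] := by rintro rfl; simp at hw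
      have := h (w.getLast hne) ⟨w.dropLast, by simp [hw]⟩
      have hww := wordMap_concat Q d K x (w.getLast hne) w.dropLast
      rw [List.dropLast_append_getLast hne] at hww
      change wordMap Q d K x w m = 0
      rw [hww]
      exact this
    · rintro h a ⟨w, hw⟩
      have := h ⟨w ++ [a], by simp [hw]⟩
      rwa [wordMap_concat] at this

theorem socPow_le_succ (x : RepSpace Q d K) (l : ℕ) :
    socPow Q d K x l ≤ socPow Q d K x (l+1) := by
  intro m hm
  rw [socPow_eq] at hm ⊢
  rintro ⟨w, hw⟩
  cases w with
  | nil => simp at hw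
  | cons a w =>
    rw [wordMap_cons, LinearMap.comp_apply, hm ⟨w, by simpa using hw⟩, map_zero]

theorem arrow_proj (x : RepSpace Q d K) (a) (i : Fin Q.n) (m : Carrier Q d K) :
    arrowMap Q d K x a (proj Q d K i m) =
      if Q.src a = i then arrowMap Q d K x a m else 0 := by
  by_cases h : Q.src a = i
  · simp [h, arrowMap, proj]
  · ext j
    simp [h, arrowMap, proj]

theorem proj_socPow (x : RepSpace Q d K) (l : ℕ) (i : Fin Q.n) (m : Carrier Q d K)
    (hm : m ∈ socPow Q d K x l) : proj Q d K i m ∈ socPow Q d K x l := by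
  cases l with
  | zero =>
    simp only [socPow, Submodule.mem_iInf, LinearMap.mem_ker] at hm ⊢
    intro a
    rw [arrow_proj]
    split_ifs
    · exact hm a
    · rfl
  | succ l =>
    simp only [socPow, Submodule.mem_iInf, Submodule.mem_comap] at hm ⊢
    intro a
    rw [arrow_proj]
    split_ifs
    · exact hm a
    · exact Submodule.zero_mem _

theorem proj_proj (i : Fin Q.n) (m : Carrier Q d K) :
    proj Q d K i (proj Q d K i m) = proj Q d K i m := by
  ext j
  by_cases h : j.1 = i <;> simp [proj, h]

/-- The family of linear maps whose common kernel is the `i`-th component of `soc_l M_x`. -/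
noncomputable def socFam (i : Fin Q.n) (l : ℕ) (x : RepSpace Q d K) :
    Option (Wd Q (l+1)) → Carrier Q d K →ₗ[K] Carrier Q d K
  | none => LinearMap.id - proj Q d K i
  | some w => wordMap Q d K x w.1

/-- The matrix obtained by stacking `socFam`. -/
noncomputable def socMat (i : Fin Q.n) (l : ℕ) (x : RepSpace Q d K) :
    Matrix (Option (Wd Q (l+1)) × (Σ i : Fin Q.n, Fin (d i))) (Σ i : Fin Q.n, Fin (d i)) K :=
  fun p k => LinearMap.toMatrix' (socFam Q d K i l x p.1) p.2 k

theorem poly_socMat (i : Fin Q.n) (l : ℕ) (p k) :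
    IsPolyFun (fun x => socMat Q d K i l x p k) := by
  obtain ⟨_ | w, j⟩ := p
  · exact IsPolyFun.const _
  · exact poly_word Q d K w.1 j k

theorem vdim_soc (i : Fin Q.n) (l : ℕ) (x : RepSpace Q d K) :
    vdim Q d K (socPow Q d K x l) i =
      Fintype.card (Σ i : Fin Q.n, Fin (d i)) - (socMat Q d K i l x).rank := by
  have hmv : ∀ (v : Carrier Q d K) p,
      (socMat Q d K i l x).mulVec v p = socFam Q d K i l x p.1 v p.2 := by
    intro v p
    conv_rhs => rw [← LinearMap.toMatrix'_mulVec (socFam Q d K i l x p.1) v]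
    rfl
  have hker : (socPow Q d K x l).map (proj Q d K i) =
      LinearMap.ker (socMat Q d K i l x).mulVecLin := by
    ext v
    have h1 : v ∈ LinearMap.ker (socMat Q d K i l x).mulVecLin ↔
        ∀ o, socFam Q d K i l x o v = 0 := by
      rw [LinearMap.mem_ker, Matrix.mulVecLin_apply]
      constructor
      · intro h o
        ext k
        rw [← hmv v (o, k), h]
        rfl
      · intro h
        ext p
        rw [hmv, h]
        rfl
    rw [h1, Submodule.mem_map]
    constructor
    · rintro ⟨m, hm, rfl⟩ (_ | w)
      · simp [socFam, proj_proj]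
      · exact (socPow_eq Q d K x l _).1 (proj_socPow Q d K x l i m hm) w
    · intro h
      refine ⟨v, (socPow_eq Q d K x l _).2 fun w => h (some w), ?_⟩
      have := h none
      simp only [socFam, LinearMap.sub_apply, LinearMap.id_apply] at this
      exact (sub_eq_zero.1 this).symm
  have hrn := LinearMap.finrank_range_add_finrank_ker (socMat Q d K i l x).mulVecLin
  rw [vdim, hker, Matrix.rank]
  rw [Module.finrank_fintype_fun_eq_card] at hrn
  rw [← hrn, Nat.add_sub_cancel_left]

theorem sum_filter_le {L : ℕ} (f : ℕ → ℕ) (l : Fin (L+1)) :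
    ∑ j ∈ Finset.univ.filter (fun j : Fin (L+1) => j ≤ l), f j =
      ∑ j ∈ Finset.range (l+1), f j := by
  refine Finset.sum_bij (fun j _ => (j : ℕ)) ?_ ?_ ?_ ?_
  · intro j hj
    simp only [Finset.mem_filter, Fin.le_def] at hj
    simp only [Finset.mem_range]
    omega
  · intro j _ k _ h
    exact Fin.ext h
  · intro j hj
    have := Finset.mem_range.1 hj
    have hl := l.2
    refine ⟨⟨j, by omega⟩, ?_, rfl⟩
    simp only [Finset.mem_filter, Finset.mem_univ, true_and, Fin.le_def]
    omega
  · intros; rfl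

theorem rad_sum (L : ℕ) (x : RepSpace Q d K) (l : Fin (L+1)) (i : Fin Q.n) :
    ∑ j ∈ Finset.univ.filter (fun j => j ≤ l), radLayering Q d K L x j i =
      vdim Q d K ⊤ i - (radMat Q d K i (l+1) x).rank := by
  rw [← vdim_rad, ← radPow_zero Q d K x]
  simp only [radLayering]
  rw [sum_filter_le (fun j => vdim Q d K (radPow Q d K x j) i -
    vdim Q d K (radPow Q d K x (j+1)) i)]
  generalize (l : ℕ) = k
  induction k with
  | zero => simp
  | succ k ih =>
    rw [Finset.sum_range_succ, ih]
    have h1 := vdim_mono Q d K (radPow_succ_le Q d K x (k+1)) i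
    have h2 : vdim Q d K (radPow Q d K x (k+1)) i ≤ vdim Q d K (radPow Q d K x 0) i :=
      vdim_mono Q d K (by rw [radPow_zero Q d K x]; exact le_top) i
    omega

theorem soc_sum (L : ℕ) (x : RepSpace Q d K) (l : Fin (L+1)) (i : Fin Q.n) :
    ∑ j ∈ Finset.univ.filter (fun j => j ≤ l), socLayering Q d K L x j i =
      Fintype.card (Σ i : Fin Q.n, Fin (d i)) - (socMat Q d K i l x).rank := by
  rw [← vdim_soc]
  simp only [socLayering]
  rw [sum_filter_le (fun j => vdim Q d K (socPow Q d K x j) i -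
    (if j = 0 then 0 else vdim Q d K (socPow Q d K x (j - 1)) i))]
  generalize (l : ℕ) = k
  induction k with
  | zero => simp
  | succ k ih =>
    rw [Finset.sum_range_succ, ih]
    have := vdim_mono Q d K (socPow_le_succ Q d K x k) i
    simp only [Nat.add_eq_zero_iff, one_ne_zero, and_false, if_false, Nat.add_sub_cancel]
    omega

end

end QuiverData

open QuiverData in
/-- For `Λ = KQ/I` basic finite dimensional over an algebraically closed
field `K` (with `J^{L+1} = 0`), the radical layering `x ↦ S(M_x)` and the socle layering
`x ↦ S*(M_x)` are upper semicontinuous on `Rep_d(Λ)` with respect to the dominance order: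
for every `d`-dimensional semisimple sequence `S`, the sets `{x | S(M_x) ≥ S}` and
`{x | S*(M_x) ≥ S}` are Zariski-closed in `Rep_d(Λ)`. -/
theorem statement_0 (K : Type) [Field K] [IsAlgClosed K]
    (Q : QuiverData) (L : ℕ) (d : Fin Q.n → ℕ)
    (Rels : Set (FreeAlgebra K (Fin Q.n ⊕ Fin Q.numArrows)))
    (hLoewy : ∀ x ∈ RepVar Q d K Rels, ∀ w : List (Fin Q.numArrows),
      w.length = L + 1 → wordMap Q d K x w = 0)
    (S : Fin (L+1) → Fin Q.n → ℕ) (hS : hasDimVec S d) :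
    IsClosed {x : GenV Q d K Rels | dominates S (radLayering Q d K L x.1)} ∧
    IsClosed {x : GenV Q d K Rels | dominates S (socLayering Q d K L x.1)} := by
  constructor
  · simp only [dominates, rad_sum, Set.ofPred_forall]
    refine isClosed_iInter fun l => isClosed_iInter fun i => ?_
    have h : IsClosed {x : RepSpace Q d K |
        ∑ j ∈ Finset.univ.filter (fun j => j ≤ l), S j i ≤ vdim Q d K ⊤ i - (radMat Q d K i (l+1) x).rank} :=
      isClosed_le_sub_rank (poly_radMat Q d K i (l+1))
        (∑ j ∈ Finset.univ.filter (fun j => j ≤ l), S j i) (vdim Q d K ⊤ i)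
    exact h.preimage continuous_subtype_val
  · simp only [dominates, soc_sum, Set.ofPred_forall]
    refine isClosed_iInter fun l => isClosed_iInter fun i => ?_
    have h : IsClosed {x : RepSpace Q d K |
        ∑ j ∈ Finset.univ.filter (fun j => j ≤ l), S j i ≤
          Fintype.card (Σ i : Fin Q.n, Fin (d i)) - (socMat Q d K i l x).rank} :=
      isClosed_le_sub_rank (poly_socMat Q d K i l)
        (∑ j ∈ Finset.univ.filter (fun j => j ≤ l), S j i)
        (Fintype.card (Σ i : Fin Q.n, Fin (d i)))
    exact h.preimage continuous_subtype_val
end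

section
/- Let X be a topological space, (A, ≤) a partially ordered set, and f : X → A an upper semicontinuous map whose image is well partially ordered, i.e., Img(f) contains no infinite strictly descending chain and every nonempty subset of Img(f) has only finitely many minimal elements. Then for every a ∈ A the preimages f^{-1}({b : b < a}) and f^{-1}({b : b ≤ a}) are open in X. Moreover, for every irreducible subset U of X, the set {f(x) : x ∈ U} has a minimum m, and the set {x ∈ U : f(x) = m} is a dense open subset of U (in the subspace topology); in particular the restriction of f to U is generically constant with generic value m. -/
/-- Let `X` be a topological space, `A` a poset, and `f : X → A` upper
semicontinuous (preimages of principal up-sets are closed) with well partially ordered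
image (no infinite strictly descending chain in the image, and every nonempty subset of
the image has only finitely many minimal elements). Then all preimages
`f⁻¹((-∞,a))` and `f⁻¹((-∞,a])` are open; moreover, on every irreducible subset `U` of
`X` the map `f` attains a minimum `m`, and `{x ∈ U | f x = m}` is a dense open subset of
`U` in the subspace topology (so `f` is generically constant on `U` with generic
value `m`). -/
theorem statement_1 {X A : Type*} [TopologicalSpace X] [PartialOrder A] (f : X → A)
    (husc : ∀ a : A, IsClosed {x | a ≤ f x})
    (hchain : ∀ g : ℕ → A, (∀ k, g k ∈ Set.range f) → ¬ StrictAnti g)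
    (hminfin : ∀ s : Set A, s ⊆ Set.range f → s.Nonempty →
      {a ∈ s | ∀ b ∈ s, ¬ b < a}.Finite) :
    (∀ a : A, IsOpen {x | f x < a} ∧ IsOpen {x | f x ≤ a}) ∧
    ∀ U : Set X, IsIrreducible U →
      ∃ m : A, m ∈ f '' U ∧ (∀ x ∈ U, m ≤ f x) ∧
        IsOpen {y : U | f y.1 = m} ∧ Dense {y : U | f y.1 = m} := by
  have hmin : ∀ S : Set A, ∀ x, f x ∈ S →
      ∃ m ∈ S ∩ Set.range f, m ≤ f x ∧ ∀ b ∈ S ∩ Set.range f, ¬ b < m := by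
    intro S x hx
    have hwf : (Set.range f).IsWF := by
      rw [Set.isWF_iff_no_descending_seq]
      intro g hg hr
      exact hchain g hr hg
    have hwf' : ({b | b ≤ f x} ∩ (S ∩ Set.range f)).IsWF :=
      hwf.mono (fun b hb => hb.2.2)
    have hne : ({b | b ≤ f x} ∩ (S ∩ Set.range f)).Nonempty := ⟨f x, le_rfl, hx, x, rfl⟩
    refine ⟨hwf'.min hne, (hwf'.min_mem hne).2, (hwf'.min_mem hne).1, ?_⟩
    intro b hb hlt
    exact hwf'.not_lt_min hne ⟨hlt.le.trans (hwf'.min_mem hne).1, hb⟩ hlt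
  have hclosed : ∀ S : Set A, IsUpperSet S → IsClosed (f ⁻¹' S) := by
    intro S hS
    rcases (S ∩ Set.range f).eq_empty_or_nonempty with he | hne
    · have : f ⁻¹' S = ∅ := by
        ext x
        simp only [Set.mem_preimage, Set.mem_empty_iff_false, iff_false]
        intro hx
        have : f x ∈ S ∩ Set.range f := ⟨hx, x, rfl⟩
        rw [he] at this
        exact this
      rw [this]
      exact isClosed_empty
    · have hfin := hminfin (S ∩ Set.range f) Set.inter_subset_right hne
      have : f ⁻¹' S = ⋃ m ∈ {a ∈ S ∩ Set.range f | ∀ b ∈ S ∩ Set.range f, ¬ b < a},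
          {x | m ≤ f x} := by
        ext x
        simp only [Set.mem_preimage, Set.mem_iUnion, exists_prop]
        constructor
        · intro hx
          obtain ⟨m, h1, h2, h3⟩ := hmin S x hx
          exact ⟨m, ⟨h1, h3⟩, h2⟩
        · rintro ⟨m, ⟨h1, -⟩, h2⟩
          exact hS h2 h1.1
      rw [this]
      exact hfin.isClosed_biUnion (fun m _ => husc m)
  have hlt : ∀ a : A, IsOpen {x | f x < a} := by
    intro a
    rw [← isClosed_compl_iff]
    exact hclosed {b | ¬ b < a} (fun b c hbc hb hc => hb (hbc.trans_lt hc))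
  have hle : ∀ a : A, IsOpen {x | f x ≤ a} := by
    intro a
    rw [← isClosed_compl_iff]
    exact hclosed {b | ¬ b ≤ a} (fun b c hbc hb hc => hb (hbc.trans hc))
  refine ⟨fun a => ⟨hlt a, hle a⟩, ?_⟩
  rintro U ⟨⟨x₀, hx₀⟩, hU⟩
  obtain ⟨m, ⟨⟨y, hy, rfl⟩, -⟩, -, hm⟩ := hmin (f '' U) x₀ ⟨x₀, hx₀, rfl⟩
  have hm' : ∀ z ∈ U, f z ≤ f y → f z = f y := fun z hz h =>
    h.eq_of_not_lt (hm _ ⟨⟨z, hz, rfl⟩, z, rfl⟩)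
  refine ⟨f y, ⟨y, hy, rfl⟩, ?_, ?_, ?_⟩
  · intro x hx
    obtain ⟨z, hz, hz1, hz2⟩ := hU _ _ (hle (f y)) (hle (f x)) ⟨y, hy, le_rfl⟩ ⟨x, hx, le_rfl⟩
    exact (hm' z hz hz1).symm.le.trans hz2
  · have : {z : U | f z.1 = f y} = Subtype.val ⁻¹' {x | f x ≤ f y} := by
      ext z
      exact ⟨fun h => le_of_eq h, fun h => hm' z.1 z.2 h⟩
    rw [this]
    exact (hle (f y)).preimage continuous_subtype_val
  · rw [dense_iff_inter_open]
    rintro _ ⟨V, hV, rfl⟩ ⟨v, hv⟩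
    obtain ⟨z, hz, hz1, hz2⟩ := hU _ _ hV (hle (f y)) ⟨v.1, v.2, hv⟩ ⟨y, hy, le_rfl⟩
    exact ⟨⟨z, hz⟩, hz1, hm' z hz hz2⟩
end

section
/- Let Λ be a basic finite-dimensional algebra over an algebraically closed field, d a dimension vector, and C an irreducible component of Rep_d(Λ). For a finite-dimensional Λ-module M write M = ⊕_{u=1}^{s(M)} M_u with all M_u indecomposable. Then there exist a natural number s, dimension vectors d^{(1)},…,d^{(s)}, and a dense open subset U of C such that for every x ∈ U one has s(M_x) = s and the multiset of dimension vectors of the indecomposable direct summands of M_x equals {d^{(1)},…,d^{(s)}}. -/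
open Finset

namespace GenDec

section Framework

variable {K : Type} [Field K]
variable {X Y Z V : Type} [AddCommGroup X] [Module K X] [AddCommGroup Y] [Module K Y]
  [AddCommGroup Z] [Module K Z] [AddCommGroup V] [Module K V]

/-- Polynomial functions on a vector space. -/
def IsPoly (K : Type) [Field K] {X : Type} [AddCommGroup X] [Module K X] (f : X → K) : Prop :=
  f ∈ Algebra.adjoin K (Set.range (fun φ : Module.Dual K X => (φ : X → K)))

/-- Polynomial maps between vector spaces. -/
def PolyMap (K : Type) [Field K] {X Y : Type} [AddCommGroup X] [Module K X]
    [AddCommGroup Y] [Module K Y] (f : X → Y) : Prop :=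
  ∀ φ : Module.Dual K Y, IsPoly K (fun x => φ (f x))

/-- Constructible predicates on a vector space. -/
inductive CP (K : Type) [Field K] {X : Type} [AddCommGroup X] [Module K X] :
    (X → Prop) → Prop
  | zero (f : X → K) : IsPoly K f → CP K (fun x => f x = 0)
  | not (P : X → Prop) : CP K P → CP K (fun x => ¬ P x)
  | and (P R : X → Prop) : CP K P → CP K R → CP K (fun x => P x ∧ R x)

theorem IsPoly.add {f g : X → K} (hf : IsPoly K f) (hg : IsPoly K g) :
    IsPoly K (fun x => f x + g x) := Subalgebra.add_mem _ hf hg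

theorem IsPoly.mul {f g : X → K} (hf : IsPoly K f) (hg : IsPoly K g) :
    IsPoly K (fun x => f x * g x) := Subalgebra.mul_mem _ hf hg

theorem IsPoly.const (c : K) : IsPoly K (fun _ : X => c) :=
  Subalgebra.algebraMap_mem (Algebra.adjoin K _) c

theorem IsPoly.lin (φ : Module.Dual K X) : IsPoly K (fun x => φ x) :=
  Algebra.subset_adjoin ⟨φ, rfl⟩

theorem IsPoly.sum {ι : Type*} (s : Finset ι) {f : ι → X → K} (hf : ∀ i, IsPoly K (f i)) :
    IsPoly K (fun x => ∑ i ∈ s, f i x) := by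
  have := Subalgebra.sum_mem (Algebra.adjoin K
    (Set.range (fun φ : Module.Dual K X => (φ : X → K)))) (t := s) (f := f) (fun i _ => hf i)
  unfold IsPoly
  convert this using 1
  funext x
  simp

theorem IsPoly.comp {f : Y → K} (hf : IsPoly K f) {g : X → Y} (hg : PolyMap K g) :
    IsPoly K (fun x => f (g x)) := by
  induction hf using Algebra.adjoin_induction with
  | mem f h => obtain ⟨φ, rfl⟩ := h; exact hg φ
  | algebraMap r => exact IsPoly.const r
  | add f g _ _ h1 h2 => exact h1.add h2
  | mul f g _ _ h1 h2 => exact h1.mul h2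

theorem PolyMap.comp {f : Y → Z} (hf : PolyMap K f) {g : X → Y} (hg : PolyMap K g) :
    PolyMap K (fun x => f (g x)) := fun φ => (hf φ).comp hg

theorem PolyMap.lin (L : X →ₗ[K] Y) : PolyMap K (fun x => L x) :=
  fun φ => IsPoly.lin (φ ∘ₗ L)

theorem PolyMap.id : PolyMap K (fun x : X => x) := PolyMap.lin LinearMap.id

theorem PolyMap.const (c : Y) : PolyMap K (fun _ : X => c) := fun φ => IsPoly.const (φ c)

theorem PolyMap.fst : PolyMap K (fun x : X × Y => x.1) := PolyMap.lin (LinearMap.fst K X Y)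
theorem PolyMap.snd : PolyMap K (fun x : X × Y => x.2) := PolyMap.lin (LinearMap.snd K X Y)

theorem PolyMap.prodMk {f : X → Y} {g : X → Z} (hf : PolyMap K f) (hg : PolyMap K g) :
    PolyMap K (fun x => (f x, g x)) := by
  intro φ
  have h := (hf (φ ∘ₗ LinearMap.inl K Y Z)).add (hg (φ ∘ₗ LinearMap.inr K Y Z))
  convert h using 2 with x
  simp [← map_add]

theorem PolyMap.add {f g : X → Y} (hf : PolyMap K f) (hg : PolyMap K g) :
    PolyMap K (fun x => f x + g x) := by
  intro φ
  simpa using (hf φ).add (hg φ)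

theorem PolyMap.sub {f g : X → Y} (hf : PolyMap K f) (hg : PolyMap K g) :
    PolyMap K (fun x => f x - g x) := by
  intro φ
  have := (hf φ).add (hg (-φ))
  simpa [sub_eq_add_neg] using this

theorem PolyMap.sum {ι : Type*} (s : Finset ι) {f : ι → X → Y} (hf : ∀ i, PolyMap K (f i)) :
    PolyMap K (fun x => ∑ i ∈ s, f i x) := by
  intro φ
  simpa using IsPoly.sum s (fun i => hf i φ)

theorem PolyMap.bilin [FiniteDimensional K Y] [FiniteDimensional K Z]
    (B : Y →ₗ[K] Z →ₗ[K] V) {f : X → Y} {g : X → Z}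
    (hf : PolyMap K f) (hg : PolyMap K g) : PolyMap K (fun x => B (f x) (g x)) := by
  intro φ
  let b := Module.finBasis K Y
  have key : ∀ x, φ (B (f x) (g x)) = ∑ i, b.coord i (f x) * (φ ∘ₗ B (b i)) (g x) := by
    intro x
    conv_lhs => rw [← b.sum_repr (f x)]
    simp only [map_sum, map_smul, LinearMap.sum_apply, LinearMap.smul_apply, smul_eq_mul,
      LinearMap.comp_apply, Module.Basis.coord_apply]
  simp_rw [key]
  exact IsPoly.sum _ fun i => (hf (b.coord i)).mul (hg (φ ∘ₗ B (b i)))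

theorem PolyMap.appl [FiniteDimensional K Y] [FiniteDimensional K Z]
    {f : X → (Y →ₗ[K] Z)} {g : X → Y}
    (hf : PolyMap K f) (hg : PolyMap K g) : PolyMap K (fun x => f x (g x)) :=
  PolyMap.bilin (LinearMap.id : (Y →ₗ[K] Z) →ₗ[K] (Y →ₗ[K] Z)) hf hg

theorem PolyMap.smul [FiniteDimensional K Y] {f : X → K} {g : X → Y}
    (hf : PolyMap K f) (hg : PolyMap K g) : PolyMap K (fun x => f x • g x) :=
  PolyMap.bilin (LinearMap.lsmul K Y : K →ₗ[K] Y →ₗ[K] Y) hf hg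

theorem PolyMap.coord {ι : Type} {f : X → ι → Y} (hf : PolyMap K f) (i : ι) :
    PolyMap K (fun x => f x i) :=
  (PolyMap.lin (LinearMap.proj i : (ι → Y) →ₗ[K] Y)).comp hf

theorem CP.comp {P : Y → Prop} (hP : CP K P) {g : X → Y} (hg : PolyMap K g) :
    CP K (fun x => P (g x)) := by
  induction hP with
  | zero f hf => exact CP.zero _ (hf.comp hg)
  | not P _ h => exact CP.not _ h
  | and P R _ _ h1 h2 => exact CP.and _ _ h1 h2

theorem CP.congr {P R : X → Prop} (hP : CP K P) (h : ∀ x, R x ↔ P x) : CP K R := by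
  have : R = P := funext fun x => propext (h x)
  rw [this]; exact hP

theorem CP.or {P R : X → Prop} (hP : CP K P) (hR : CP K R) : CP K (fun x => P x ∨ R x) :=
  (((hP.not).and _ _ (hR.not)).not).congr fun x => by tauto

theorem CP.imp {P R : X → Prop} (hP : CP K P) (hR : CP K R) : CP K (fun x => P x → R x) :=
  ((hP.not).or hR).congr fun x => by tauto

theorem CP.true : CP K (fun _ : X => True) :=
  (CP.zero _ (IsPoly.const (0 : K))).congr fun x => by simp

theorem CP.false : CP K (fun _ : X => False) :=
  (CP.true.not).congr fun x => by simp

theorem CP.ofProp (p : Prop) : CP K (fun _ : X => p) := by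
  by_cases h : p
  · exact CP.true.congr fun x => by simp [h]
  · exact CP.false.congr fun x => by simp [h]

theorem CP.finsetAll {ι : Type*} (s : Finset ι) {P : ι → X → Prop} (h : ∀ i, CP K (P i)) :
    CP K (fun x => ∀ i ∈ s, P i x) := by
  classical
  induction s using Finset.induction_on with
  | empty => exact CP.true.congr fun x => by simp
  | insert a s _ ih => exact ((h a).and _ _ ih).congr fun x => by simp

theorem CP.all {ι : Type*} [Finite ι] {P : ι → X → Prop} (h : ∀ i, CP K (P i)) :
    CP K (fun x => ∀ i, P i x) := by
  cases nonempty_fintype ι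
  exact (CP.finsetAll Finset.univ h).congr fun x => by simp

theorem CP.any {ι : Type*} [Finite ι] {P : ι → X → Prop} (h : ∀ i, CP K (P i)) :
    CP K (fun x => ∃ i, P i x) :=
  ((CP.all fun i => (h i).not).not).congr fun x => by simp

theorem CP.eq [FiniteDimensional K Y] {f g : X → Y} (hf : PolyMap K f) (hg : PolyMap K g) :
    CP K (fun x => f x = g x) := by
  let b := Module.finBasis K Y
  refine (CP.all fun i => CP.zero _ ((hf.sub hg) (b.coord i))).congr fun x => ?_
  rw [← sub_eq_zero, ← b.forall_coord_eq_zero_iff]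

/-! ### Chevalley -/

theorem mv_isPoly {ι : Type} (p : MvPolynomial ι K) :
    IsPoly K (fun x : ι → K => MvPolynomial.eval x p) := by
  induction p using MvPolynomial.induction_on with
  | C a => simpa using IsPoly.const a
  | add p q hp hq => simpa using hp.add hq
  | mul_X p i hp => simpa using hp.mul (IsPoly.lin (LinearMap.proj i : (ι → K) →ₗ[K] K))

theorem isPoly_mv {ι : Type} [Finite ι] {f : (ι → K) → K} (hf : IsPoly K f) :
    ∃ p : MvPolynomial ι K, ∀ x, f x = MvPolynomial.eval x p := by
  classical
  cases nonempty_fintype ι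
  induction hf using Algebra.adjoin_induction with
  | mem f h =>
    obtain ⟨φ, rfl⟩ := h
    refine ⟨∑ i, MvPolynomial.C (φ (Pi.single i 1)) * MvPolynomial.X i, fun x => ?_⟩
    simp only [map_sum, map_mul, MvPolynomial.eval_C, MvPolynomial.eval_X]
    conv_lhs => rw [pi_eq_sum_univ' x]
    simp [mul_comm]
  | algebraMap r => exact ⟨MvPolynomial.C r, fun x => by simp⟩
  | add f g _ _ h1 h2 =>
    obtain ⟨p, hp⟩ := h1
    obtain ⟨q, hq⟩ := h2
    exact ⟨p + q, fun x => by simp [hp, hq]⟩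
  | mul f g _ _ h1 h2 =>
    obtain ⟨p, hp⟩ := h1
    obtain ⟨q, hq⟩ := h2
    exact ⟨p * q, fun x => by simp [hp, hq]⟩

/-- the closed point of the spectrum. -/
noncomputable def pt {ι : Type} (x : ι → K) : PrimeSpectrum (MvPolynomial ι K) :=
  MvPolynomial.pointToPoint (k := K) x

theorem mem_pt {ι : Type} (x : ι → K) (p : MvPolynomial ι K) :
    p ∈ (pt x).asIdeal ↔ MvPolynomial.eval x p = 0 := by
  unfold pt MvPolynomial.pointToPoint
  simp only [MvPolynomial.mem_vanishingIdeal_singleton_iff]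
  rfl

theorem pt_inj {ι : Type} {x y : ι → K} (h : pt x = pt y) : x = y := by
  funext i
  have := mem_pt y (MvPolynomial.X i - MvPolynomial.C (x i))
  rw [← h, mem_pt] at this
  simp [sub_eq_zero] at this
  exact this.symm

theorem cp_to_spec {ι : Type} [Finite ι] {P : (ι → K) → Prop} (hP : CP K P) :
    ∃ s : Set (PrimeSpectrum (MvPolynomial ι K)), Topology.IsConstructible s ∧
      ∀ x, P x ↔ pt x ∈ s := by
  induction hP with
  | zero f hf =>
    obtain ⟨p, hp⟩ := isPoly_mv hf
    refine ⟨PrimeSpectrum.zeroLocus {p}, ?_, fun x => ?_⟩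
    · rw [← Topology.isConstructible_compl]
      exact (PrimeSpectrum.isRetrocompact_zeroLocus_compl
        (Set.finite_singleton _)).isConstructible (PrimeSpectrum.isClosed_zeroLocus _).isOpen_compl
    · simp [PrimeSpectrum.mem_zeroLocus, mem_pt, hp]
  | not P _ h =>
    obtain ⟨s, hs, h⟩ := h
    exact ⟨sᶜ, hs.compl, fun x => by simp [h]⟩
  | and P R _ _ h1 h2 =>
    obtain ⟨s, hs, h⟩ := h1
    obtain ⟨t, ht, h'⟩ := h2
    exact ⟨s ∩ t, hs.inter ht, fun x => by simp [h, h']⟩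

theorem spec_to_cp {ι : Type} {s : Set (PrimeSpectrum (MvPolynomial ι K))}
    (hs : Topology.IsConstructible s) : CP K (fun x : ι → K => pt x ∈ s) := by
  obtain ⟨S, rfl⟩ := PrimeSpectrum.exists_constructibleSetData_iff.mpr hs
  have : CP K (fun x : ι → K => ∃ C : S, (∀ i, MvPolynomial.eval x (C.1.g i) = 0) ∧
      ¬ MvPolynomial.eval x C.1.f = 0) :=
    CP.any fun C => CP.and _ _ (CP.all fun i => CP.zero _ (mv_isPoly _))
      (CP.not _ (CP.zero _ (mv_isPoly _)))
  refine this.congr fun x => ?_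
  simp [PrimeSpectrum.ConstructibleSetData.toSet, PrimeSpectrum.BasicConstructibleSetData.toSet,
    PrimeSpectrum.mem_zeroLocus, Set.range_subset_iff, mem_pt]

theorem constructible_closedPoint {A : Type} [CommRing A] [IsJacobsonRing A]
    {s F : Set (PrimeSpectrum A)} (hs : Topology.IsConstructible s) (hF : IsClosed F)
    (hne : (s ∩ F).Nonempty) : ∃ p ∈ s ∩ F, IsClosed {p} := by
  obtain ⟨S, rfl⟩ := PrimeSpectrum.exists_constructibleSetData_iff.mpr hs
  obtain ⟨q, hq, hqF⟩ := hne
  simp only [PrimeSpectrum.ConstructibleSetData.toSet, Set.mem_iUnion] at hq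
  obtain ⟨C, hC, hqC⟩ := hq
  have hlc : IsLocallyClosed (C.toSet ∩ F) := by
    refine IsLocallyClosed.inter ?_ hF.isLocallyClosed
    unfold PrimeSpectrum.BasicConstructibleSetData.toSet
    exact (PrimeSpectrum.isClosed_zeroLocus _).isLocallyClosed.inter
      (PrimeSpectrum.isClosed_zeroLocus _).isOpen_compl.isLocallyClosed
  obtain ⟨p, ⟨hp1, hp2⟩, hp3⟩ := nonempty_inter_closedPoints
    (Z := C.toSet ∩ F) ⟨q, hqC, hqF⟩ hlc
  refine ⟨p, ⟨?_, hp2⟩, hp3⟩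
  simp only [PrimeSpectrum.ConstructibleSetData.toSet, Set.mem_iUnion]
  exact ⟨C, hC, hp1⟩

theorem isClosed_pt {ι : Type} (x : ι → K) : IsClosed {pt x} := by
  rw [PrimeSpectrum.isClosed_singleton_iff_isMaximal]
  unfold pt MvPolynomial.pointToPoint
  infer_instance

theorem comap_pt {ι κ : Type} (z : ι ⊕ κ → K) :
    PrimeSpectrum.comap (MvPolynomial.rename (R := K) (Sum.inl : ι → ι ⊕ κ)).toRingHom (pt z)
      = pt (fun i => z (Sum.inl i)) := by
  ext p
  rw [mem_pt]
  simp [PrimeSpectrum.comap_asIdeal, mem_pt, MvPolynomial.eval_rename, Function.comp_def]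

theorem rename_fp {ι κ : Type} [Finite ι] [Finite κ] :
    (MvPolynomial.rename (R := K) (Sum.inl : ι → ι ⊕ κ)).toRingHom.FinitePresentation := by
  refine RingHom.FinitePresentation.of_finiteType.1 ?_
  have : (MvPolynomial.rename (R := K) (Sum.inl : ι → ι ⊕ κ)).FiniteType := by
    refine AlgHom.FiniteType.of_comp_finiteType (f := Algebra.ofId K _) ?_
    have h : Algebra.FiniteType K (MvPolynomial (ι ⊕ κ) K) := inferInstance
    have : (MvPolynomial.rename (R := K) (Sum.inl : ι → ι ⊕ κ)).comp (Algebra.ofId K _)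
      = Algebra.ofId K _ := Subsingleton.elim _ _
    rw [this]
    exact (RingHom.finiteType_algebraMap).2 h
  exact this

theorem cp_exists_coord [IsAlgClosed K] {ι κ : Type} [Finite ι] [Finite κ]
    {P : (ι ⊕ κ → K) → Prop} (hP : CP K P) :
    CP K (fun x : ι → K => ∃ y : κ → K, P (Sum.elim x y)) := by
  obtain ⟨s, hs, h⟩ := cp_to_spec hP
  refine (spec_to_cp (PrimeSpectrum.isConstructible_comap_image (rename_fp (K := K) (ι := ι)
    (κ := κ)) hs)).congr fun x => ⟨?_, ?_⟩
  · rintro ⟨y, hy⟩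
    refine ⟨pt (Sum.elim x y), (h _).1 hy, ?_⟩
    rw [comap_pt]; simp
  · rintro ⟨q, hq, hqx⟩
    obtain ⟨p, ⟨hp1, hp2⟩, hp3⟩ := constructible_closedPoint hs
      ((isClosed_pt x).preimage (PrimeSpectrum.continuous_comap
        (MvPolynomial.rename (R := K) (Sum.inl : ι → ι ⊕ κ)).toRingHom)) ⟨q, hq, hqx⟩
    rw [PrimeSpectrum.isClosed_singleton_iff_isMaximal] at hp3
    obtain ⟨z, hz⟩ := MvPolynomial.isMaximal_iff_eq_vanishingIdeal_singleton.1 hp3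
    have hpz : p = pt z := PrimeSpectrum.ext hz
    subst hpz
    have h2 : PrimeSpectrum.comap _ (pt z) = pt x := hp2
    rw [comap_pt] at h2
    have := pt_inj h2
    refine ⟨fun k => z (Sum.inr k), ?_⟩
    rw [h]
    convert hp1
    funext i
    cases i with
    | inl i => simp [← this]
    | inr i => simp

theorem CP.ex [IsAlgClosed K] [FiniteDimensional K X] [FiniteDimensional K Y]
    {P : X × Y → Prop} (hP : CP K P) : CP K (fun x => ∃ y, P (x, y)) := by
  let b := (Module.finBasis K X).equivFun
  let c := (Module.finBasis K Y).equivFun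
  let L : (Fin (Module.finrank K X) ⊕ Fin (Module.finrank K Y) → K) →ₗ[K] X × Y :=
    (LinearMap.prodMap b.symm.toLinearMap c.symm.toLinearMap) ∘ₗ
      (LinearEquiv.sumArrowLequivProdArrow _ _ K K).toLinearMap
  have h1 := (cp_exists_coord (hP.comp (PolyMap.lin L))).comp (PolyMap.lin b.toLinearMap)
  refine h1.congr fun x => ?_
  have hL : ∀ u v, L (Sum.elim u v) = (b.symm u, c.symm v) := fun u v => by
    simp [L]
    constructor <;> congr 1
  constructor
  · rintro ⟨y, hy⟩
    exact ⟨c y, by simpa [hL] using hy⟩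
  · rintro ⟨y, hy⟩
    exact ⟨c.symm y, by simpa [hL] using hy⟩

theorem CP.fa [IsAlgClosed K] [FiniteDimensional K X] [FiniteDimensional K Y]
    {P : X × Y → Prop} (hP : CP K P) : CP K (fun x => ∀ y, P (x, y)) :=
  (hP.not.ex.not).congr fun x => by simp

/-- Generic dichotomy. -/
theorem CP.generic {T : Type} [TopologicalSpace T] (j : T → X)
    (hj : ∀ f : X → K, IsPoly K f → IsOpen {t | f (j t) ≠ 0}) {C : Set T} (hC : IsIrreducible C)
    {P : X → Prop} (hP : CP K P) :
    ∃ W, IsOpen W ∧ (C ∩ W).Nonempty ∧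
      ((∀ t ∈ C ∩ W, P (j t)) ∨ (∀ t ∈ C ∩ W, ¬ P (j t))) := by
  induction hP with
  | zero f hf =>
    by_cases h : (C ∩ {t | f (j t) ≠ 0}).Nonempty
    · exact ⟨_, hj f hf, h, Or.inr fun t ht => ht.2⟩
    · refine ⟨Set.univ, isOpen_univ, by simpa using hC.1, Or.inl fun t ht => ?_⟩
      by_contra hne
      exact h ⟨t, ht.1, hne⟩
  | not P _ h =>
    obtain ⟨W, h1, h2, h3⟩ := h
    refine ⟨W, h1, h2, ?_⟩
    rcases h3 with h3 | h3
    · exact Or.inr fun t ht => not_not.2 (h3 t ht)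
    · exact Or.inl h3
  | and P R _ _ h h' =>
    obtain ⟨W, h1, h2, h3⟩ := h
    obtain ⟨W', h1', h2', h3'⟩ := h'
    refine ⟨W ∩ W', h1.inter h1', hC.2 _ _ h1 h1' h2 h2', ?_⟩
    rcases h3 with h3 | h3
    · rcases h3' with h3' | h3'
      · exact Or.inl fun t ht => ⟨h3 t ⟨ht.1, ht.2.1⟩, h3' t ⟨ht.1, ht.2.2⟩⟩
      · exact Or.inr fun t ht hh => h3' t ⟨ht.1, ht.2.2⟩ hh.2
    · exact Or.inr fun t ht hh => h3 t ⟨ht.1, ht.2.1⟩ hh.1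

theorem generic_cover {T : Type} [TopologicalSpace T] (j : T → X)
    (hj : ∀ f : X → K, IsPoly K f → IsOpen {t | f (j t) ≠ 0}) {C : Set T} (hC : IsIrreducible C)
    {ι : Type} [Finite ι] {P : ι → X → Prop} (hP : ∀ i, CP K (P i))
    (hcov : ∀ t ∈ C, ∃ i, P i (j t)) :
    ∃ i, ∃ W, IsOpen W ∧ (C ∩ W).Nonempty ∧ ∀ t ∈ C ∩ W, P i (j t) := by
  classical
  cases nonempty_fintype ι
  by_contra hcon
  push Not at hcon
  have key : ∀ s : Finset ι, ∃ W, IsOpen W ∧ (C ∩ W).Nonempty ∧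
      ∀ t ∈ C ∩ W, ∀ i ∈ s, ¬ P i (j t) := by
    intro s
    induction s using Finset.induction_on with
    | empty => exact ⟨Set.univ, isOpen_univ, by simpa using hC.1, by simp⟩
    | insert a s _ ih =>
      obtain ⟨W, h1, h2, h3⟩ := ih
      obtain ⟨W', h1', h2', h3'⟩ := (hP a).generic j hj hC
      rcases h3' with h3' | h3'
      · obtain ⟨t, ht, ht'⟩ := hcon a W' h1' h2'
        exact absurd (h3' t ht) ht'
      · refine ⟨W ∩ W', h1.inter h1', hC.2 _ _ h1 h1' h2 h2', fun t ht i hi => ?_⟩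
        rcases Finset.mem_insert.1 hi with rfl | hi
        · exact h3' t ⟨ht.1, ht.2.2⟩
        · exact h3 t ⟨ht.1, ht.2.1⟩ i hi
  obtain ⟨W, _, ⟨t, ht⟩, h3⟩ := key Finset.univ
  obtain ⟨i, hi⟩ := hcov t ht.1
  exact h3 t ht i (Finset.mem_univ i) hi

end Framework

end GenDec

namespace GenDec

section Definable

variable {K : Type} [Field K] [IsAlgClosed K]
variable {X X' Y V V' : Type} [AddCommGroup X] [Module K X] [FiniteDimensional K X]
  [AddCommGroup X'] [Module K X'] [FiniteDimensional K X']
  [AddCommGroup Y] [Module K Y] [FiniteDimensional K Y]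
  [AddCommGroup V] [Module K V] [FiniteDimensional K V]
  [AddCommGroup V'] [Module K V'] [FiniteDimensional K V']


/-- A constructible family of subspaces. -/
def DS (K : Type) [Field K] {X V : Type} [AddCommGroup X] [Module K X]
    [AddCommGroup V] [Module K V] (N : X → Submodule K V) : Prop :=
  CP K (fun z : X × V => z.2 ∈ N z.1)

theorem CP.exx {P : X → Y → Prop} (h : CP K (fun z : X × Y => P z.1 z.2)) :
    CP K (fun x => ∃ y, P x y) := h.ex

theorem CP.faa {P : X → Y → Prop} (h : CP K (fun z : X × Y => P z.1 z.2)) :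
    CP K (fun x => ∀ y, P x y) := h.fa

theorem DS.mem {N : X → Submodule K V} (h : DS K N) {g : X' → X} {f : X' → V}
    (hg : PolyMap K g) (hf : PolyMap K f) : CP K (fun x => f x ∈ N (g x)) :=
  CP.comp h (hg.prodMk hf)

theorem DS.comp {N : X → Submodule K V} (h : DS K N) {g : X' → X}
    (hg : PolyMap K g) : DS K (fun x => N (g x)) :=
  h.mem (hg.comp PolyMap.fst) PolyMap.snd

theorem DS.le {N M : X → Submodule K V} (hN : DS K N) (hM : DS K M) :
    CP K (fun x => N x ≤ M x) := by
  have : CP K (fun x => ∀ v, v ∈ N x → v ∈ M x) :=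
    CP.faa (P := fun x v => v ∈ N x → v ∈ M x) (CP.imp hN hM)
  exact this.congr fun x => Iff.rfl

theorem DS.eq {N M : X → Submodule K V} (hN : DS K N) (hM : DS K M) :
    CP K (fun x => N x = M x) :=
  ((hN.le hM).and _ _ (hM.le hN)).congr fun x => le_antisymm_iff

theorem DS.const (N : Submodule K V) : DS K (fun _ : X => N) := by
  unfold DS
  refine (CP.eq (f := fun z : X × V => N.mkQ z.2) (g := fun _ => 0)
    ((PolyMap.lin N.mkQ).comp PolyMap.snd) (PolyMap.const 0)).congr fun x => ?_
  simp

theorem DS.map {N : X → Submodule K V} (hN : DS K N) {f : X → (V →ₗ[K] V')}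
    (hf : PolyMap K f) : DS K (fun x => (N x).map (f x)) := by
  unfold DS
  have : CP K (fun z : X × V' => ∃ v : V, v ∈ N z.1 ∧ f z.1 v = z.2) := by
    refine CP.exx (P := fun (z : X × V') (v : V) => v ∈ N z.1 ∧ f z.1 v = z.2) (CP.and _ _ ?_ ?_)
    · exact hN.mem (PolyMap.fst.comp PolyMap.fst) PolyMap.snd
    · exact CP.eq (PolyMap.appl (hf.comp (PolyMap.fst.comp PolyMap.fst)) PolyMap.snd)
        (PolyMap.snd.comp PolyMap.fst)
  exact this.congr fun z => Submodule.mem_map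

theorem DS.range {f : X → (V →ₗ[K] V')} (hf : PolyMap K f) :
    DS K (fun x => LinearMap.range (f x)) := by
  have := (DS.const (X := X) (⊤ : Submodule K V)).map hf
  simpa using this

theorem DS.sup {N M : X → Submodule K V} (hN : DS K N) (hM : DS K M) :
    DS K (fun x => N x ⊔ M x) := by
  unfold DS
  have : CP K (fun z : X × V => ∃ v : V, v ∈ N z.1 ∧ z.2 - v ∈ M z.1) := by
    refine CP.exx (P := fun (z : X × V) (v : V) => v ∈ N z.1 ∧ z.2 - v ∈ M z.1) (CP.and _ _ ?_ ?_)
    · exact hN.mem (PolyMap.fst.comp PolyMap.fst) PolyMap.snd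
    · exact hM.mem (PolyMap.fst.comp PolyMap.fst) ((PolyMap.snd.comp PolyMap.fst).sub PolyMap.snd)
  refine this.congr fun z => ?_
  rw [Submodule.mem_sup]
  constructor
  · rintro ⟨y, hy, w, hw, h⟩
    exact ⟨y, hy, by rw [← h]; simpa using hw⟩
  · rintro ⟨y, hy, hw⟩
    exact ⟨y, hy, _, hw, by simp⟩

theorem DS.inf {N M : X → Submodule K V} (hN : DS K N) (hM : DS K M) :
    DS K (fun x => N x ⊓ M x) :=
  (CP.and _ _ hN hM).congr fun z => Submodule.mem_inf

theorem DS.finsetSup {ι : Type*} (s : Finset ι) {N : ι → X → Submodule K V}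
    (h : ∀ i, DS K (N i)) : DS K (fun x => s.sup fun i => N i x) := by
  classical
  induction s using Finset.induction_on with
  | empty => simpa using DS.const (X := X) (⊥ : Submodule K V)
  | insert a s _ ih => simpa using (h a).sup ih

theorem DS.iSup {ι : Type*} [Finite ι] {N : ι → X → Submodule K V}
    (h : ∀ i, DS K (N i)) : DS K (fun x => ⨆ i, N i x) := by
  cases nonempty_fintype ι
  simpa [Finset.sup_univ_eq_iSup] using DS.finsetSup Finset.univ h

theorem finrank_le_iff (N : Submodule K V) (k : ℕ) :
    Module.finrank K N ≤ k ↔ ∃ L : (Fin k → K) →ₗ[K] V, N ≤ LinearMap.range L := by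
  constructor
  · intro h
    have h' : Module.finrank K N ≤ Module.finrank K (Fin k → K) := by simpa using h
    obtain ⟨f, hf⟩ := finrank_le_iff_exists_linearMap.1 h'
    obtain ⟨g, hg⟩ := LinearMap.exists_leftInverse_of_injective f (LinearMap.ker_eq_bot.2 hf)
    refine ⟨N.subtype ∘ₗ g, fun v hv => ⟨f ⟨v, hv⟩, ?_⟩⟩
    have := LinearMap.congr_fun hg ⟨v, hv⟩
    simp only [LinearMap.comp_apply, LinearMap.id_apply] at this
    simp [this]
  · rintro ⟨L, hL⟩
    calc Module.finrank K N ≤ Module.finrank K (LinearMap.range L) :=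
          Submodule.finrank_mono hL
      _ ≤ Module.finrank K (Fin k → K) := LinearMap.finrank_range_le L
      _ = k := by simp

theorem DS.finrank_le {N : X → Submodule K V} (hN : DS K N) (k : ℕ) :
    CP K (fun x => Module.finrank K (N x) ≤ k) := by
  have : CP K (fun x => ∃ L : (Fin k → K) →ₗ[K] V, N x ≤ LinearMap.range L) :=
    CP.exx (P := fun x (L : (Fin k → K) →ₗ[K] V) => N x ≤ LinearMap.range L)
      ((hN.comp PolyMap.fst).le (DS.range PolyMap.snd))
  exact this.congr fun x => finrank_le_iff _ _

theorem DS.finrank_eq {N : X → Submodule K V} (hN : DS K N) (k : ℕ) :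
    CP K (fun x => Module.finrank K (N x) = k) := by
  refine ((hN.finrank_le k).and _ _
    ((CP.ofProp (k = 0)).or ((hN.finrank_le (k - 1)).not))).congr fun x => ?_
  omega

theorem exists_range (N : Submodule K V) : ∃ E : V →ₗ[K] V, LinearMap.range E = N := by
  obtain ⟨q, hq⟩ := N.exists_isCompl
  exact ⟨_, Submodule.range_projection hq⟩

theorem CP.faSub {P : X → Submodule K V → Prop}
    (h : CP K (fun z : X × (V →ₗ[K] V) => P z.1 (LinearMap.range z.2))) :
    CP K (fun x => ∀ N, P x N) := by
  refine (CP.faa (P := fun x (E : V →ₗ[K] V) => P x (LinearMap.range E)) h).congr fun x => ?_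
  constructor
  · intro h E; exact h _
  · intro h N
    obtain ⟨E, rfl⟩ := exists_range N
    exact h E

theorem CP.exSub {s : ℕ} {P : X → (Fin s → Submodule K V) → Prop}
    (h : CP K (fun z : X × (Fin s → (V →ₗ[K] V)) => P z.1 (fun r => LinearMap.range (z.2 r)))) :
    CP K (fun x => ∃ N, P x N) := by
  refine (CP.exx (P := fun x (E : Fin s → (V →ₗ[K] V)) =>
    P x (fun r => LinearMap.range (E r))) h).congr fun x => ?_
  constructor
  · rintro ⟨N, hN⟩
    choose E hE using fun r => exists_range (N r)
    refine ⟨E, ?_⟩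
    have : (fun r => LinearMap.range (E r)) = N := funext hE
    rw [this]; exact hN
  · rintro ⟨E, hE⟩
    exact ⟨_, hE⟩

end Definable

section Rep

open QuiverData

variable {K : Type} [Field K] [IsAlgClosed K] {Q : QuiverData} {d : Fin Q.n → ℕ}
variable {X : Type} [AddCommGroup X] [Module K X] [FiniteDimensional K X]

theorem polyMap_arrowMap (a : Fin Q.numArrows) :
    PolyMap K (fun x : RepSpace Q d K => arrowMap Q d K x a) := by
  refine PolyMap.lin (IsLinearMap.mk' (fun x : RepSpace Q d K => arrowMap Q d K x a) ⟨?_, ?_⟩)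
  · intro x y
    refine LinearMap.ext fun m => funext fun jv => ?_
    by_cases h : jv.1 = Q.tgt a <;>
      simp [arrowMap, h, add_mul, Finset.sum_add_distrib]
  · intro c x
    refine LinearMap.ext fun m => funext fun jv => ?_
    by_cases h : jv.1 = Q.tgt a <;>
      simp [arrowMap, h, Finset.mul_sum, mul_assoc]

theorem cp_stable {g : X → RepSpace Q d K} (hg : PolyMap K g)
    {N : X → Submodule K (Carrier Q d K)} (hN : DS K N) :
    CP K (fun x => Stable Q d K (g x) (N x)) := by
  unfold Stable
  refine CP.and _ _ (CP.all fun a => ?_) (CP.all fun i => ?_)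
  · exact (hN.map ((polyMap_arrowMap a).comp hg)).le hN
  · exact (hN.map (PolyMap.const _)).le hN

theorem cp_indecomp {g : X → RepSpace Q d K} (hg : PolyMap K g)
    {N : X → Submodule K (Carrier Q d K)} (hN : DS K N) :
    CP K (fun x => IndecompSub Q d K (g x) (N x)) := by
  unfold IndecompSub
  refine CP.and _ _ (CP.not _ (hN.eq (DS.const ⊥))) (CP.faSub (CP.faSub ?_))
  have h1 : DS K (fun z : (X × (Carrier Q d K →ₗ[K] Carrier Q d K)) ×
      (Carrier Q d K →ₗ[K] Carrier Q d K) => LinearMap.range z.1.2) :=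
    DS.range (PolyMap.snd.comp PolyMap.fst)
  have h2 : DS K (fun z : (X × (Carrier Q d K →ₗ[K] Carrier Q d K)) ×
      (Carrier Q d K →ₗ[K] Carrier Q d K) => LinearMap.range z.2) :=
    DS.range PolyMap.snd
  have hg' : PolyMap K (fun z : (X × (Carrier Q d K →ₗ[K] Carrier Q d K)) ×
      (Carrier Q d K →ₗ[K] Carrier Q d K) => g z.1.1) :=
    hg.comp (PolyMap.fst.comp PolyMap.fst)
  have hN' : DS K (fun z : (X × (Carrier Q d K →ₗ[K] Carrier Q d K)) ×
      (Carrier Q d K →ₗ[K] Carrier Q d K) => N z.1.1) :=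
    hN.comp (PolyMap.fst.comp PolyMap.fst)
  exact (cp_stable hg' h1).imp ((cp_stable hg' h2).imp ((h1.le hN').imp ((h2.le hN').imp
    (((h1.sup h2).eq hN').imp (((h1.inf h2).eq (DS.const ⊥)).imp
      ((h1.eq (DS.const ⊥)).or (h2.eq (DS.const ⊥))))))))

theorem cp_decomp (s : ℕ) (D : Fin s → Fin Q.n → ℕ) :
    CP K (fun x : RepSpace Q d K => DecompWith Q d K x s D) := by
  unfold DecompWith
  refine CP.exSub ?_
  have hr : ∀ r, DS K (fun z : RepSpace Q d K ×
      (Fin s → (Carrier Q d K →ₗ[K] Carrier Q d K)) => LinearMap.range (z.2 r)) :=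
    fun r => DS.range (PolyMap.snd.coord r)
  have hg : PolyMap K (fun z : RepSpace Q d K ×
      (Fin s → (Carrier Q d K →ₗ[K] Carrier Q d K)) => z.1) := PolyMap.fst
  refine CP.and _ _ (CP.all fun r => cp_stable hg (hr r)) (CP.and _ _ (CP.all fun r => ?_)
    (CP.and _ _ ?_ (CP.and _ _ (CP.all fun r => cp_indecomp hg (hr r))
      (CP.all fun r => CP.all fun i => ?_))))
  · have h2 : DS K (fun z : RepSpace Q d K ×
        (Fin s → (Carrier Q d K →ₗ[K] Carrier Q d K)) =>
          ⨆ t, ⨆ (_ : t ≠ r), LinearMap.range (z.2 t)) :=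
      DS.iSup fun t => by
        by_cases h : t ≠ r
        · simpa only [h, ne_eq, not_false_eq_true, iSup_pos] using hr t
        · simpa only [h, iSup_false] using DS.const (K := K) ⊥
    refine (((hr r).inf h2).eq (DS.const ⊥)).congr fun z => ?_
    exact disjoint_iff
  · exact (DS.iSup hr).eq (DS.const ⊤)
  · exact ((hr r).map (PolyMap.const _)).finrank_eq _


theorem exists_finset_decomp (x : RepSpace Q d K) (n : ℕ) :
    ∀ N : Submodule K (Carrier Q d K), Stable Q d K x N → Module.finrank K N ≤ n →
    ∃ S : Finset (Submodule K (Carrier Q d K)), S.SupIndep id ∧ S.sup id = N ∧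
      ∀ M ∈ S, Stable Q d K x M ∧ IndecompSub Q d K x M := by
  classical
  induction n with
  | zero =>
    intro N _ hN
    have : N = ⊥ := Submodule.finrank_eq_zero.1 (by omega)
    exact ⟨∅, Finset.supIndep_empty _, by simp [this], by simp⟩
  | succ n ih =>
    intro N hst hN
    by_cases hb : N = ⊥
    · exact ⟨∅, Finset.supIndep_empty _, by simp [hb], by simp⟩
    by_cases hI : IndecompSub Q d K x N
    · exact ⟨{N}, Finset.supIndep_singleton _ _, by simp, by simpa using ⟨hst, hI⟩⟩
    unfold IndecompSub at hI
    push Not at hI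
    obtain ⟨N₁, N₂, s1, s2, l1, l2, hsup, hinf, b1, b2⟩ := hI hb
    have hrk := Submodule.finrank_sup_add_finrank_inf_eq N₁ N₂
    rw [hsup, hinf, finrank_bot] at hrk
    have p1 : Module.finrank K N₁ ≠ 0 := fun h => b1 (Submodule.finrank_eq_zero.1 h)
    have p2 : Module.finrank K N₂ ≠ 0 := fun h => b2 (Submodule.finrank_eq_zero.1 h)
    obtain ⟨S, i1, e1, f1⟩ := ih N₁ s1 (by omega)
    obtain ⟨T, i2, e2, f2⟩ := ih N₂ s2 (by omega)
    refine ⟨S ∪ T, i1.union i2 (by rw [e1, e2]; exact disjoint_iff.2 hinf), ?_, ?_⟩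
    · rw [Finset.sup_union, e1, e2, hsup]
    · intro M hM
      rcases Finset.mem_union.1 hM with h | h
      · exact f1 M h
      · exact f2 M h

theorem exists_decomp (x : RepSpace Q d K) :
    ∃ (s : Fin (Module.finrank K (Carrier Q d K) + 1))
      (D : Fin s → Fin Q.n → Fin (Module.finrank K (Carrier Q d K) + 1)),
      DecompWith Q d K x s (fun r i => D r i) := by
  classical
  obtain ⟨S, hS, hsup, h⟩ := exists_finset_decomp x _ ⊤
    ⟨fun a => le_top, fun i => le_top⟩ le_rfl
  let e := S.equivFin
  let N : Fin S.card → Submodule K (Carrier Q d K) := fun r => (e.symm r).1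
  have hind0 : iSupIndep (fun M : S => M.1) := iSupIndep_comp_coe_iff_supIndep.2 hS
  have hind : iSupIndep N := hind0.comp e.symm.injective
  have hne : ∀ r, N r ≠ ⊥ := fun r => (h _ (e.symm r).2).2.1
  have hcard : S.card ≤ Module.finrank K (Carrier Q d K) := by
    have := hind.subtype_ne_bot_le_finrank
    simpa [hne] using this
  refine ⟨⟨S.card, by omega⟩, fun r i => ⟨vdim Q d K (N r) i,
    Nat.lt_succ_of_le (Submodule.finrank_le _)⟩, N, fun r => (h _ (e.symm r).2).1, hind, ?_,
    fun r => (h _ (e.symm r).2).2, fun r i => rfl⟩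
  rw [← hsup, Finset.sup_eq_iSup, iSup_subtype']
  exact e.symm.iSup_comp (g := fun M : S => M.1)

end Rep

end GenDec

open QuiverData in
/-- On every irreducible component `C` of `Rep_d(Λ)`, the number of
indecomposable direct summands and the multiset of their dimension vectors are
generically constant: there are `s`, dimension vectors `D 0, …, D (s-1)`, and a dense
open subset `U` of `C` such that for every `x ∈ U` the module `M_x` decomposes into
exactly `s` indecomposable summands with dimension vectors `D 0, …, D (s-1)`. -/
theorem statement_2 (K : Type) [Field K] [IsAlgClosed K]
    (Q : QuiverData) (d : Fin Q.n → ℕ)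
    (Rels : Set (FreeAlgebra K (Fin Q.n ⊕ Fin Q.numArrows)))
    (C : Set (GenV Q d K Rels))
    (hC : C ∈ irreducibleComponents (GenV Q d K Rels)) :
    ∃ (s : ℕ) (D : Fin s → Fin Q.n → ℕ) (U : Set (GenV Q d K Rels)),
      U ⊆ C ∧ (∃ W, IsOpen W ∧ U = C ∩ W) ∧ C ⊆ closure U ∧
      ∀ x ∈ U, DecompWith Q d K x.1 s D := by
  have hirr : IsIrreducible C := hC.prop
  have hj : ∀ f : RepSpace Q d K → K, GenDec.IsPoly K f →
      IsOpen {t : GenV Q d K Rels | f t.1 ≠ 0} := by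
    intro f hf
    obtain ⟨p, hp⟩ := GenDec.isPoly_mv hf
    have h1 : IsOpen {x : RepSpace Q d K | f x ≠ 0} := by
      apply TopologicalSpace.isOpen_generateFrom_of_mem
      exact ⟨p, by simp [hp]⟩
    exact h1.preimage continuous_subtype_val
  obtain ⟨i, W, hW, hne, hP⟩ := GenDec.generic_cover (K := K) (X := RepSpace Q d K)
    (fun t : GenV Q d K Rels => t.1) hj hirr
    (ι := Σ s : Fin (Module.finrank K (Carrier Q d K) + 1),
      (Fin s → Fin Q.n → Fin (Module.finrank K (Carrier Q d K) + 1)))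
    (P := fun i x => DecompWith Q d K x i.1 (fun r k => i.2 r k))
    (fun i => GenDec.cp_decomp _ _)
    (fun t _ => by
      obtain ⟨s, D, h⟩ := GenDec.exists_decomp t.1
      exact ⟨⟨s, D⟩, h⟩)
  refine ⟨i.1, fun r k => i.2 r k, C ∩ W, Set.inter_subset_left, ⟨W, hW, rfl⟩, ?_, hP⟩
  intro t ht
  rw [mem_closure_iff]
  intro O hO htO
  obtain ⟨u, hu, huO, huW⟩ := hirr.2 O W hO hW ⟨t, ht, htO⟩ hne
  exact ⟨u, huO, hu, huW⟩
end
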